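/- arXiv:1911.04976 — 2 statements merged into one kernel-verified Lean document; each statement's English description precedes it below -/
import Mathlib

section
/- Let ρ be a generator of Gal(L/k) and let ρ̃ := ρ ⊗ id_K be the induced k-algebra automorphism of LK. Then for every ν ∈ K, the map (l, x) ↦ (ρ(l), ρ̃(x)) of L × LK is a k-linear bijection that fixes the base point (1, 0) and preserves the Tits-process norm form with parameters u = 1, μ = ν; that is, N_{1,ν}(ρ(l), ρ̃(x)) = N_{1,ν}(l, x) for all l ∈ L and x ∈ LK. -/
open scoped TensorProduct

attribute [local instance] Algebra.TensorProduct.rightAlgebra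

/-- The Tits-process norm form `N_{u,μ}` on `L × (L ⊗[k] K)`:
`N_{u,μ}(l, x) = N_{L/k}(l) + Tr_{K/k}(μ · N_{LK/K}(x)) − Tr_{LK/k}((l⊗1)·x·(u⊗1)·x*)`,
where `x* = (id_L ⊗ ι) x`. -/
noncomputable def titsNorm (k : Type*) {L K : Type*} [Field k] [Field L] [Field K]
    [Algebra k L] [Algebra k K] (ι : K ≃ₐ[k] K) (u : L) (μ : K)
    (l : L) (x : L ⊗[k] K) : k :=
  Algebra.norm k l + Algebra.trace k K (μ * Algebra.norm K x)
    - Algebra.trace k (L ⊗[k] K)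
        ((l ⊗ₜ[k] (1 : K)) * x * (u ⊗ₜ[k] (1 : K)) *
          (Algebra.TensorProduct.congr (AlgEquiv.refl : L ≃ₐ[k] L) ι x))

/-- The map `(l, x) ↦ (ρ(l), (ρ ⊗ id_K)(x))` on `L × (L ⊗[k] K)`. -/
noncomputable def rhoProdMap {k L K : Type*} [Field k] [Field L] [Field K]
    [Algebra k L] [Algebra k K] (ρ : L ≃ₐ[k] L) :
    L × (L ⊗[k] K) → L × (L ⊗[k] K) :=
  fun p => (ρ p.1, Algebra.TensorProduct.congr ρ (AlgEquiv.refl : K ≃ₐ[k] K) p.2)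

/-- if `ρ` generates `Gal(L/k)` (with `L/k` cyclic cubic, `K/k` quadratic Galois
with nontrivial automorphism `ι`), then for every `ν ∈ K` the map
`(l, x) ↦ (ρ(l), (ρ ⊗ id_K)(x))` is a `k`-linear bijection fixing the base point `(1, 0)`
and preserving the Tits-process norm form with parameters `u = 1`, `μ = ν`. -/
theorem titsNorm_invariant_under_generator
    (k L K : Type*) [Field k] [Field L] [Field K] [Algebra k L] [Algebra k K]
    [IsGalois k L] (hL : Module.finrank k L = 3)
    [IsGalois k K] (hK : Module.finrank k K = 2)
    (ι : K ≃ₐ[k] K) (hι : ι ≠ AlgEquiv.refl)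
    (ρ : L ≃ₐ[k] L) (hρ : ∀ σ : L ≃ₐ[k] L, σ ∈ Subgroup.zpowers ρ)
    (ν : K) :
    Function.Bijective (rhoProdMap (K := K) ρ) ∧
    (∀ p q : L × (L ⊗[k] K), rhoProdMap (K := K) ρ (p + q)
        = rhoProdMap (K := K) ρ p + rhoProdMap (K := K) ρ q) ∧
    (∀ (c : k) (p : L × (L ⊗[k] K)), rhoProdMap (K := K) ρ (c • p)
        = c • rhoProdMap (K := K) ρ p) ∧
    rhoProdMap (K := K) ρ ((1 : L), (0 : L ⊗[k] K)) = ((1 : L), (0 : L ⊗[k] K)) ∧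
    (∀ (l : L) (x : L ⊗[k] K),
      titsNorm k ι 1 ν (ρ l) (Algebra.TensorProduct.congr ρ (AlgEquiv.refl : K ≃ₐ[k] K) x)
        = titsNorm k ι 1 ν l x) := by
  set e := Algebra.TensorProduct.congr ρ (AlgEquiv.refl : K ≃ₐ[k] K) with he
  refine ⟨?_, ?_, ?_, ?_, ?_⟩
  · exact Function.Bijective.prodMap ρ.bijective e.bijective
  · intro p q
    exact Prod.ext (map_add ρ _ _) (map_add e _ _)
  · intro c p
    exact Prod.ext (map_smul ρ _ _) (map_smul e _ _)
  · exact Prod.ext (map_one ρ) (map_zero e)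
  · intro l x
    have h1 : Algebra.norm k (ρ l) = Algebra.norm k l := Algebra.norm_eq_of_algEquiv ρ l
    have h2 : Algebra.norm K (e x) = Algebra.norm K x := by
      let e' : (L ⊗[k] K) ≃ₐ[K] (L ⊗[k] K) :=
        AlgEquiv.ofRingEquiv (f := e.toRingEquiv) (by
          intro r
          change e ((1 : L) ⊗ₜ[k] r) = (1 : L) ⊗ₜ[k] r
          simp [he])
      exact Algebra.norm_eq_of_algEquiv e' x
    have h3 : Algebra.TensorProduct.congr (AlgEquiv.refl : L ≃ₐ[k] L) ι (e x)
        = e (Algebra.TensorProduct.congr (AlgEquiv.refl : L ≃ₐ[k] L) ι x) := by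
      clear h2
      induction x with
      | zero => simp only [map_zero]
      | tmul a b => simp [he]
      | add a b ha hb => simp only [map_add, ha, hb]
    have h4 : (ρ l) ⊗ₜ[k] (1 : K) = e (l ⊗ₜ[k] (1 : K)) := by simp [he]
    have h5 : ((1 : L) ⊗ₜ[k] (1 : K)) = e ((1 : L) ⊗ₜ[k] (1 : K)) := by simp [he]
    unfold titsNorm
    rw [h1, h2, h3, h4]
    conv_lhs => rw [h5]
    rw [← map_mul, ← map_mul, ← map_mul, Algebra.trace_eq_of_algEquiv e]
end

section
/- For all u, v ∈ L^×, all μ ∈ K, and all l ∈ L, x ∈ LK, one has N_{u·v^#, N_{L/k}(v)·μ}(l·v, x) = N_{L/k}(v) · N_{u,μ}(l, x). (This expresses that the k-linear bijection (l, x) ↦ (l·v, x) of L × LK is a norm similarity with multiplier N_{L/k}(v), realizing the isomorphism of the v-isotope J(LK, *, u, μ)^{(v)} with J(LK, *, u·v^#, N_{L/k}(v)·μ).) -/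
open scoped TensorProduct

attribute [local instance] Algebra.TensorProduct.rightAlgebra

/-- the map `(l, x) ↦ (l·v, x)` is a norm similarity with multiplier
`N_{L/k}(v)` from `N_{u,μ}` to `N_{u·v^#, N_{L/k}(v)·μ}`, where `v^# = N_{L/k}(v)·v⁻¹`. -/
theorem titsNorm_isotope_similarity
    (k L K : Type*) [Field k] [Field L] [Field K] [Algebra k L] [Algebra k K]
    (hL : Module.finrank k L = 3)
    [IsGalois k K] (hK : Module.finrank k K = 2)
    (ι : K ≃ₐ[k] K) (hι : ι ≠ AlgEquiv.refl)
    (u v : L) (hu : u ≠ 0) (hv : v ≠ 0) (μ : K) (l : L) (x : L ⊗[k] K) :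
    titsNorm k ι (u * (algebraMap k L (Algebra.norm k v) * v⁻¹))
        (algebraMap k K (Algebra.norm k v) * μ) (l * v) x
      = Algebra.norm k v * titsNorm k ι u μ l x := by
  have key : ((l * v) ⊗ₜ[k] (1 : K)) * x *
        ((u * (algebraMap k L (Algebra.norm k v) * v⁻¹)) ⊗ₜ[k] (1 : K)) *
        (Algebra.TensorProduct.congr (AlgEquiv.refl : L ≃ₐ[k] L) ι x)
      = Algebra.norm k v • ((l ⊗ₜ[k] (1 : K)) * x * (u ⊗ₜ[k] (1 : K)) *
          (Algebra.TensorProduct.congr (AlgEquiv.refl : L ≃ₐ[k] L) ι x)) := by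
    have h : ((l * v) ⊗ₜ[k] (1 : K)) *
        ((u * (algebraMap k L (Algebra.norm k v) * v⁻¹)) ⊗ₜ[k] (1 : K))
        = Algebra.norm k v • ((l ⊗ₜ[k] (1 : K)) * (u ⊗ₜ[k] (1 : K))) := by
      rw [Algebra.TensorProduct.tmul_mul_tmul, Algebra.TensorProduct.tmul_mul_tmul,
        TensorProduct.smul_tmul', Algebra.smul_def]
      congr 1
      field_simp
    rw [mul_right_comm _ x, h, mul_right_comm (l ⊗ₜ[k] (1 : K)) x, smul_mul_assoc,
      smul_mul_assoc]
  unfold titsNorm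
  rw [key, map_smul, map_mul, mul_assoc, ← Algebra.smul_def, map_smul, smul_eq_mul, smul_eq_mul]
  ring
end
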